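/- Let E be a real inner product space, let f : E → ℝ be differentiable with gradient ∇f that is Lipschitz continuous with constant L > 0, and let α > 0 satisfy α ≤ 1/L. Suppose θ' = θ + α(∇f(θ) + e₁ + e₂ − e₃) for vectors e₁, e₂, e₃ ∈ E (the lazily aggregated policy-gradient update, where e₁ is the truncation error of the gradient, e₂ is the stochastic estimation error, and e₃ is the aggregate of the skipped agents' gradient innovations). Then f(θ) − f(θ') ≤ −(α/2)‖∇f(θ)‖² + (3α/2)‖e₁‖² + (3α/2)‖e₂‖² + (3α/2)‖e₃‖² + (L/2 − 1/(2α))‖θ' − θ‖². -/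

import Mathlib

/-! With `e` the total error, the step `d = α • (∇f θ + e)` satisfies `∇f θ - α⁻¹ • d = -e`.
Polarization therefore turns `⟪∇f θ, d⟫` into `(α/2)‖∇f θ‖² + (1/(2α))‖d‖² - (α/2)‖e‖²`. The
quadratic lower bound for functions with Lipschitz gradient gives the ascent inequality for the
single error `e`, and Cauchy–Schwarz distributes `‖e‖²` over the three errors at the cost of a
factor `3`. -/

open Set
open scoped RealInnerProductSpace

section Remainder

variable {F : Type*} [NormedAddCommGroup F] [NormedSpace ℝ F]

theorem norm_sub_sub_smul_deriv_le {φ φ' : ℝ → F} {a b K : ℝ} (hab : a ≤ b)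
    (hφ : ∀ t ∈ Icc a b, HasDerivWithinAt φ (φ' t) (Icc a b) t)
    (hK : ∀ t ∈ Icc a b, ‖φ' t - φ' a‖ ≤ K * (t - a)) :
    ‖φ b - φ a - (b - a) • φ' a‖ ≤ K / 2 * (b - a) ^ 2 := by
  have hremainder : ∀ t ∈ Icc a b,
      HasDerivWithinAt (fun t => φ t - φ a - (t - a) • φ' a) (φ' t - φ' a) (Icc a b) t :=
    fun t ht => by
      simpa using ((hφ t ht).sub_const (φ a)).fun_sub
        (((hasDerivWithinAt_id t _).sub_const a).smul_const (φ' a))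
  have hquadratic : ∀ t, HasDerivAt (fun t => K / 2 * (t - a) ^ 2) (K * (t - a)) t := fun t =>
    ((((hasDerivAt_id t).sub_const a).fun_pow 2).const_mul (K / 2)).congr_deriv (by simp; ring)
  exact image_norm_le_of_norm_deriv_right_le_deriv_boundary
    (fun t ht => (hremainder t ht).continuousWithinAt)
    (fun t ht => (hremainder t (Ico_subset_Icc_self ht)).mono_of_mem_nhdsWithin
      (Icc_mem_nhdsGE_of_mem ht))
    (by simp) hquadratic (fun t ht => hK t (Ico_subset_Icc_self ht)) (right_mem_Icc.2 hab)

theorem norm_sub_sub_fderiv_apply_le_of_starConvex {E : Type*} [NormedAddCommGroup E]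
    [NormedSpace ℝ E] {f : E → F} {f' : E → E →L[ℝ] F} {s : Set E} {x y : E} {L : ℝ}
    (hs : StarConvex ℝ x s) (hf : ∀ z ∈ s, HasFDerivWithinAt f (f' z) s z)
    (hL : ∀ z ∈ s, ‖f' z - f' x‖ ≤ L * ‖z - x‖) (hy : y ∈ s) :
    ‖f y - f x - f' x (y - x)‖ ≤ L / 2 * ‖y - x‖ ^ 2 := by
  set d := y - x with hd
  have hmem : ∀ t ∈ Icc (0 : ℝ) 1, x + t • d ∈ s := fun t ht =>
    hs.add_smul_sub_mem hy ht.1 ht.2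
  have hderiv : ∀ t ∈ Icc (0 : ℝ) 1,
      HasDerivWithinAt (fun t : ℝ => f (x + t • d)) (f' (x + t • d) d) (Icc 0 1) t :=
    fun t ht => by
      have hline : HasDerivWithinAt (fun t : ℝ => x + t • d) d (Icc 0 1) t := by
        simpa using ((hasDerivWithinAt_id t _).smul_const d).const_add x
      exact (hf _ (hmem t ht)).comp_hasDerivWithinAt t hline hmem
  have hlip : ∀ t ∈ Icc (0 : ℝ) 1,
      ‖f' (x + t • d) d - f' (x + (0 : ℝ) • d) d‖ ≤ L * ‖d‖ ^ 2 * (t - 0) := fun t ht => calc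
    ‖f' (x + t • d) d - f' (x + (0 : ℝ) • d) d‖ = ‖(f' (x + t • d) - f' x) d‖ := by simp
    _ ≤ ‖f' (x + t • d) - f' x‖ * ‖d‖ := (f' (x + t • d) - f' x).le_opNorm d
    _ ≤ L * ‖x + t • d - x‖ * ‖d‖ := by gcongr; exact hL _ (hmem t ht)
    _ = L * ‖d‖ ^ 2 * (t - 0) := by
      rw [add_sub_cancel_left, norm_smul, Real.norm_of_nonneg ht.1]; ring
  calc
    ‖f y - f x - f' x d‖ ≤ L * ‖d‖ ^ 2 / 2 * (1 - 0) ^ 2 := by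
      simpa [hd] using norm_sub_sub_smul_deriv_le zero_le_one hderiv hlip
    _ = L / 2 * ‖d‖ ^ 2 := by ring

end Remainder

section Seminormed

variable {E : Type*} [SeminormedAddCommGroup E]

theorem norm_sum_sq_le_card_mul_sum_norm_sq {ι : Type*} (s : Finset ι) (x : ι → E) :
    ‖∑ i ∈ s, x i‖ ^ 2 ≤ s.card * ∑ i ∈ s, ‖x i‖ ^ 2 :=
  (pow_le_pow_left₀ (norm_nonneg _) (norm_sum_le s x) 2).trans sq_sum_le_card_mul_sum_sq

theorem norm_add_sub_sq_le (a b c : E) :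
    ‖a + b - c‖ ^ 2 ≤ 3 * (‖a‖ ^ 2 + ‖b‖ ^ 2 + ‖c‖ ^ 2) := by
  simpa [Fin.sum_univ_three, sub_eq_add_neg] using
    norm_sum_sq_le_card_mul_sum_norm_sq Finset.univ ![a, b, -c]

theorem real_inner_smul_add_eq [InnerProductSpace ℝ E] {α : ℝ} (hα : α ≠ 0) (g e : E) :
    ⟪g, α • (g + e)⟫ =
      α / 2 * ‖g‖ ^ 2 + 1 / (2 * α) * ‖α • (g + e)‖ ^ 2 - α / 2 * ‖e‖ ^ 2 := by
  rw [real_inner_smul_right, inner_add_right, real_inner_self_eq_norm_sq, norm_smul, mul_pow,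
    Real.norm_eq_abs, sq_abs, norm_add_sq_real]
  field_simp
  ring

end Seminormed

section Ascent

variable {E : Type*} [NormedAddCommGroup E] [InnerProductSpace ℝ E]
  {f : E → ℝ} {g : E → E} {s : Set E} {L : ℝ}

-- `HasGradientWithinAt` goes through the Riesz isomorphism and so needs a complete space; writing
-- the derivative as `innerSL ℝ (g z)` says that `g` is the gradient without it.
theorem sub_le_neg_inner_add_of_starConvex {x y : E} (hs : StarConvex ℝ x s)
    (hf : ∀ z ∈ s, HasFDerivWithinAt f (innerSL ℝ (g z)) s z)
    (hL : ∀ z ∈ s, ‖g z - g x‖ ≤ L * ‖z - x‖) (hy : y ∈ s) :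
    f x - f y ≤ -⟪g x, y - x⟫ + L / 2 * ‖y - x‖ ^ 2 := by
  have hL' : ∀ z ∈ s, ‖innerSL ℝ (g z) - innerSL ℝ (g x)‖ ≤ L * ‖z - x‖ := fun z hz => by
    rw [← map_sub, innerSL_apply_norm]
    exact hL z hz
  have hremainder := neg_le_of_abs_le
    (norm_sub_sub_fderiv_apply_le_of_starConvex hs hf hL' hy)
  rw [innerSL_apply_apply] at hremainder
  linarith

theorem sub_le_of_perturbed_gradient_step {α : ℝ} {θ e : E} (hα : α ≠ 0)
    (hs : StarConvex ℝ θ s) (hf : ∀ z ∈ s, HasFDerivWithinAt f (innerSL ℝ (g z)) s z)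
    (hL : ∀ z ∈ s, ‖g z - g θ‖ ≤ L * ‖z - θ‖) (hmem : θ + α • (g θ + e) ∈ s) :
    f θ - f (θ + α • (g θ + e)) ≤ -(α / 2) * ‖g θ‖ ^ 2 + α / 2 * ‖e‖ ^ 2
      + (L / 2 - 1 / (2 * α)) * ‖α • (g θ + e)‖ ^ 2 := by
  have hquadratic := sub_le_neg_inner_add_of_starConvex hs hf hL hmem
  rw [add_sub_cancel_left, real_inner_smul_add_eq hα] at hquadratic
  linarith

theorem lapg_ascent_general {α : ℝ} {θ θ' e₁ e₂ e₃ : E} (hs : StarConvex ℝ θ s)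
    (hf : ∀ z ∈ s, HasFDerivWithinAt f (innerSL ℝ (g z)) s z)
    (hL : ∀ z ∈ s, ‖g z - g θ‖ ≤ L * ‖z - θ‖) (hα : 0 < α) (hmem : θ' ∈ s)
    (hupd : θ' = θ + α • (g θ + e₁ + e₂ - e₃)) :
    f θ - f θ' ≤ -(α / 2) * ‖g θ‖ ^ 2
      + (3 * α / 2) * ‖e₁‖ ^ 2 + (3 * α / 2) * ‖e₂‖ ^ 2 + (3 * α / 2) * ‖e₃‖ ^ 2
      + (L / 2 - 1 / (2 * α)) * ‖θ' - θ‖ ^ 2 := by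
  have htotal : θ' = θ + α • (g θ + (e₁ + e₂ - e₃)) := by rw [hupd, add_assoc, add_sub_assoc]
  have hstep := sub_le_of_perturbed_gradient_step hα.ne' hs hf hL (htotal ▸ hmem)
  rw [← htotal, ← sub_eq_iff_eq_add'.2 htotal] at hstep
  have herror := mul_le_mul_of_nonneg_left (norm_add_sub_sq_le e₁ e₂ e₃) (half_pos hα).le
  linarith

end Ascent

/-- **LAPG Ascent lemma.** If `f : E → ℝ` is differentiable with `L`-Lipschitz
gradient, `0 < α ≤ 1/L`, and `θ' = θ + α • (∇f θ + e₁ + e₂ - e₃)` is the lazily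
aggregated policy-gradient update (with gradient truncation error `e₁`,
stochastic estimation error `e₂`, and aggregated skipped innovations `e₃`), then
`f θ - f θ' ≤ -(α/2)‖∇f θ‖² + (3α/2)‖e₁‖² + (3α/2)‖e₂‖² + (3α/2)‖e₃‖²
  + (L/2 - 1/(2α))‖θ' - θ‖²`. -/
theorem lapg_ascent {E : Type*} [NormedAddCommGroup E] [InnerProductSpace ℝ E]
    [CompleteSpace E]
    (f : E → ℝ) (hf : Differentiable ℝ f) (L : ℝ) (hL : 0 < L)
    (hlip : ∀ x y : E, ‖gradient f x - gradient f y‖ ≤ L * ‖x - y‖)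
    (α : ℝ) (hα : 0 < α) (hαL : α ≤ 1 / L)
    (θ θ' e₁ e₂ e₃ : E)
    (hupd : θ' = θ + α • (gradient f θ + e₁ + e₂ - e₃)) :
    f θ - f θ' ≤ -(α / 2) * ‖gradient f θ‖ ^ 2
      + (3 * α / 2) * ‖e₁‖ ^ 2 + (3 * α / 2) * ‖e₂‖ ^ 2 + (3 * α / 2) * ‖e₃‖ ^ 2
      + (L / 2 - 1 / (2 * α)) * ‖θ' - θ‖ ^ 2 := by
  exact lapg_ascent_general (starConvex_univ θ)
    (fun z _ => (hf z).hasGradientAt.hasFDerivAt.hasFDerivWithinAt)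
    (fun z _ => hlip z θ) hα (mem_univ θ') hupd
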